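/- Let q = p^m where p ≡ 3 (mod 8) is prime and m ≡ 2 (mod 4). Let x, a, b be integers with x² = q, q = a² + 2b² with a ≡ 1 (mod 4), and suppose x + a = −2. Then: (i) D_1 = {C_3^8 ∪ C_5^8, C_2^8 ∪ C_6^8} is a (q,2,(q−1)/4;(q−7−2x)/8,(q−3+2x)/8)-DPDF relative to C_0^2; (ii) D_2 = {C_0^8 ∪ C_2^8, C_3^8 ∪ C_7^8} is a (q,2,(q−1)/4;(q−3+2x)/8,(q−7−2x)/8)-DPDF relative to C_0^2. -/

import Mathlib

open Finset

section Defs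

variable {G : Type*} [AddCommGroup G] [Fintype G] [DecidableEq G]

/-- The multiset `Δ(D)` of internal differences `x - y` (for `x ≠ y` in `D`). -/
def intDiff (D : Finset G) : Multiset G :=
  ((D ×ˢ D).filter (fun p => p.1 ≠ p.2)).val.map (fun p => p.1 - p.2)

/-- The multiset `Δ(D, E)` of external differences `x - y` for `x ∈ D`, `y ∈ E`. -/
def extDiff (D E : Finset G) : Multiset G :=
  (D ×ˢ E).val.map (fun p => p.1 - p.2)

/-- The finset `G^*` of nonzero elements of `G`. -/
def Gstar (G : Type*) [AddCommGroup G] [Fintype G] [DecidableEq G] : Finset G :=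
  Finset.univ.erase 0

/-- `A` is a `(v, k, lam, mu)` partial difference set in `G`:
`Δ(A) = lam • A^* + mu • (G^* \ A)`. -/
def IsPDS (A : Finset G) (v k lam mu : ℕ) : Prop :=
  Fintype.card G = v ∧ A.card = k ∧
    intDiff A = lam • (A.erase 0).val + mu • (Gstar G \ A).val

/-- `D` is a `(v, k, lam, mu)` skew partial difference set corresponding to the
`(v, k, lam, mu)`-PDS `A`: `Δ(D) = lam • A^* + mu • (G^* \ A)`. -/
def IsSkewPDS (D A : Finset G) (v k lam mu : ℕ) : Prop :=
  IsPDS A v k lam mu ∧ D.card = k ∧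
    intDiff D = lam • (A.erase 0).val + mu • (Gstar G \ A).val

/-- `D` is an `(n, m, k₁, …, k_m; lam, mu)` disjoint partial difference family relative
to `T`: the `D i` are pairwise disjoint subsets of `G^*` of sizes `k i`, and
`∑ i, Δ(D i) = lam • T + mu • (G^* \ T)`. -/
def IsDPDF {ι : Type*} [Fintype ι] (D : ι → Finset G) (n m : ℕ) (k : ι → ℕ)
    (T : Finset G) (lam mu : ℕ) : Prop :=
  Fintype.card G = n ∧ Fintype.card ι = m ∧
    (∀ i, (0 : G) ∉ D i) ∧ (∀ i, (D i).card = k i) ∧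
    (Pairwise (fun i j => Disjoint (D i) (D j))) ∧
    ∑ i, intDiff (D i) = lam • T.val + mu • (Gstar G \ T).val

/-- `D` is an `(n, m, k₁, …, k_m; lam, mu)` external partial difference family relative
to `T`: the `D i` are pairwise disjoint subsets of `G^*` of sizes `k i`, and
`∑_{i ≠ j}, Δ(D i, D j) = lam • T + mu • (G^* \ T)`. -/
def IsEPDF {ι : Type*} [Fintype ι] [DecidableEq ι] (D : ι → Finset G) (n m : ℕ)
    (k : ι → ℕ) (T : Finset G) (lam mu : ℕ) : Prop :=
  Fintype.card G = n ∧ Fintype.card ι = m ∧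
    (∀ i, (0 : G) ∉ D i) ∧ (∀ i, (D i).card = k i) ∧
    (Pairwise (fun i j => Disjoint (D i) (D j))) ∧
    ∑ i, ∑ j ∈ Finset.univ.erase i, extDiff (D i) (D j)
      = lam • T.val + mu • (Gstar G \ T).val

/-- `D` is an `(n, m, k₁, …, k_m, lam)` disjoint difference family:
`∑ i, Δ(D i) = lam • G^*`. -/
def IsDDF {ι : Type*} [Fintype ι] (D : ι → Finset G) (n m : ℕ) (k : ι → ℕ)
    (lam : ℕ) : Prop :=
  Fintype.card G = n ∧ Fintype.card ι = m ∧
    (∀ i, (0 : G) ∉ D i) ∧ (∀ i, (D i).card = k i) ∧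
    (Pairwise (fun i j => Disjoint (D i) (D j))) ∧
    ∑ i, intDiff (D i) = lam • (Gstar G).val

/-- `D` is an `(n, m, k₁, …, k_m, lam)` external difference family:
`∑_{i ≠ j}, Δ(D i, D j) = lam • G^*`. -/
def IsEDF {ι : Type*} [Fintype ι] [DecidableEq ι] (D : ι → Finset G) (n m : ℕ)
    (k : ι → ℕ) (lam : ℕ) : Prop :=
  Fintype.card G = n ∧ Fintype.card ι = m ∧
    (∀ i, (0 : G) ∉ D i) ∧ (∀ i, (D i).card = k i) ∧
    (Pairwise (fun i j => Disjoint (D i) (D j))) ∧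
    ∑ i, ∑ j ∈ Finset.univ.erase i, extDiff (D i) (D j) = lam • (Gstar G).val

end Defs

section Cyclotomy

variable {F : Type*} [Field F] [Fintype F] [DecidableEq F]

/-- The cyclotomic class `C_i^e = α^i ⟨α^e⟩` of order `e` in the finite field `F`,
with respect to the primitive element `α`.  (Since `α` has multiplicative order at most
`|F| - 1`, letting `j` range over `0, …, |F| - 1` captures the whole class.) -/
def cycClass (α : F) (e i : ℕ) : Finset F :=
  (Finset.range (Fintype.card F)).image (fun j => α ^ (e * j + i))

/-- `α` is a primitive element of the finite field `F`: every nonzero element of `F`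
is a power of `α`. -/
def IsPrimitiveElt (α : F) : Prop :=
  ∀ x : F, x ≠ 0 → ∃ n : ℕ, α ^ n = x

end Cyclotomy

-- uniqueness of primitive representations
lemma uniq_rep (p m : ℕ) (hp : p.Prime) (hp2 : p ≠ 2) (a b c d : ℤ)
    (h1 : a^2+2*b^2 = (p:ℤ)^m) (h2 : c^2+2*d^2 = (p:ℤ)^m) (hm : m ≠ 0)
    (ha : ¬ (p:ℤ) ∣ a) (hc : ¬ (p:ℤ) ∣ c) : a^2 = c^2 := by
  have hpp : Prime (p:ℤ) := Nat.prime_iff_prime_int.mp hp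
  have hq0 : (0:ℤ) < (p:ℤ)^m := by have := hp.pos; positivity
  have hpq : (p:ℤ) ∣ (p:ℤ)^m := dvd_pow_self _ hm
  have hd : ¬ (p:ℤ) ∣ d := by
    intro h
    apply hc
    have : (p:ℤ) ∣ c^2 := by
      have : c^2 = (p:ℤ)^m - 2*d*d := by rw [← h2]; ring
      rw [this]
      exact dvd_sub hpq (Dvd.dvd.mul_left h _)
    exact hpp.dvd_of_dvd_pow this
  have h2p : ¬ (p:ℤ) ∣ 2 := by
    intro h
    have : p ∣ 2 := by exact_mod_cast h
    exact hp2 ((Nat.prime_dvd_prime_iff_eq hp Nat.prime_two).mp this)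
  have key : ∀ e : ℤ, e^2 = d^2 → (p:ℤ)^m ∣ a*e-c*b → a^2=c^2 := by
    intro e he hdv
    have h3 : c^2+2*e^2 = (p:ℤ)^m := by rw [he]; exact h2
    have h4 : (a*c+2*b*e)^2 + 2*(a*e-c*b)^2 = (p:ℤ)^m*(p:ℤ)^m := by
      nth_rewrite 1 [← h1]; rw [← h3]; ring
    have h5 : a*e-c*b = 0 := by
      obtain ⟨k, hk⟩ := hdv
      rw [hk] at h4 ⊢
      by_cases hk0 : k = 0
      · simp [hk0]
      · have : 1 ≤ k^2 := by have := sq_pos_of_ne_zero hk0; omega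
        nlinarith [sq_nonneg (a*c+2*b*e), mul_pos hq0 hq0]
    have h6 : a*e = c*b := by linarith
    have h7 : (a^2-c^2) * (p:ℤ)^m = 0 := by
      have : a^2*e^2 = c^2*b^2 := by rw [← mul_pow, h6]; ring
      have e1 : a^2 * (p:ℤ)^m = a^2*c^2 + 2*(a^2*e^2) := by rw [← h3]; ring
      have e2 : c^2 * (p:ℤ)^m = a^2*c^2 + 2*(c^2*b^2) := by rw [← h1]; ring
      rw [sub_mul, e1, e2, this]; ring
    rcases mul_eq_zero.mp h7 with h | h
    · linarith
    · exact absurd h hq0.ne'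
  have hprod : (p:ℤ)^m ∣ (a*d-c*b)*(a*d+c*b) := by
    refine ⟨d^2-b^2, ?_⟩
    have : a^2 = (p:ℤ)^m - 2*b^2 := by linarith
    have h' : c^2 = (p:ℤ)^m - 2*d^2 := by linarith
    calc (a*d-c*b)*(a*d+c*b) = a^2*d^2-c^2*b^2 := by ring
      _ = _ := by rw [this, h']; ring
  by_cases hx : (p:ℤ) ∣ a*d-c*b
  · have hy : ¬ (p:ℤ) ∣ a*d+c*b := by
      intro hy
      have : (p:ℤ) ∣ 2*(a*d) := by
        have := dvd_add hx hy
        ring_nf at this ⊢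
        exact this
      rcases hpp.dvd_or_dvd this with h | h
      · exact h2p h
      · rcases hpp.dvd_or_dvd h with h | h
        · exact ha h
        · exact hd h
    have : IsCoprime ((p:ℤ)^m) (a*d+c*b) := IsCoprime.pow_left ((Prime.coprime_iff_not_dvd hpp).mpr hy)
    exact key d rfl (this.dvd_of_dvd_mul_right hprod)
  · have : IsCoprime ((p:ℤ)^m) (a*d-c*b) := IsCoprime.pow_left ((Prime.coprime_iff_not_dvd hpp).mpr hx)
    have := this.dvd_of_dvd_mul_left hprod
    refine key (-d) (by ring) ?_
    have e : a * -d - c*b = -(a*d+c*b) := by ring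
    rw [e]
    exact (dvd_neg).mpr this

lemma choose_ndvd (p : ℕ) (hp : p.Prime) (hp8 : p % 8 = 3) (t J : ℕ) (h : 8*J+1 = p^(2*t)) :
    ¬ p ∣ (5*J).choose (3*J) := by
  have := Fact.mk hp
  obtain ⟨k, hk⟩ : ∃ k, p = 8*k+3 := ⟨p/8, by omega⟩
  induction t generalizing J with
  | zero =>
    have : J = 0 := by simp at h; exact h
    subst this
    simpa using hp.one_lt.ne'
  | succ t ih =>
    obtain ⟨J', hJ'⟩ : ∃ J', 8*J'+1 = p^(2*t) := by
      have : p^(2*t) % 8 = 1 := by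
        rw [pow_mul, Nat.pow_mod, Nat.pow_mod p, hp8]; simp
      exact ⟨p^(2*t)/8, by omega⟩
    have ih' := ih J' hJ'
    have hJ : J = p*(p*J' + k) + (3*k+1) := by
      have : 8*J+1 = p^2*(8*J'+1) := by rw [h, hJ']; ring
      have h2 : p^2 = 8*(p*k+(3*k+1))+1 := by rw [hk]; ring
      have : 8*J = 8*(p*(p*J' + k) + (3*k+1)) := by
        have e : 8*J+1 = 8*(p*(p*J' + k) + (3*k+1))+1 := by
          rw [this]
          calc p^2*(8*J'+1) = 8*(p*(p*J')) + p^2 := by ring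
            _ = _ := by rw [h2]; ring
        omega
      omega
    have h5 : 5*J = p*(p*(5*J') + (5*k+1)) + (7*k+2) := by
      rw [hJ]; 
      have : 5*(3*k+1) = p + (7*k+2) := by omega
      calc _ = p*(p*(5*J') + 5*k) + 5*(3*k+1) := by ring
        _ = _ := by rw [this]; ring
    have h3 : 3*J = p*(p*(3*J') + (3*k+1)) + k := by
      rw [hJ]; 
      have : 3*(3*k+1) = p + k := by omega
      calc _ = p*(p*(3*J') + 3*k) + 3*(3*k+1) := by ring
        _ = _ := by rw [this]; ring
    have md : ∀ a b, b < p → (p*a+b) % p = b := fun a b hb => by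
      rw [Nat.mul_add_mod, Nat.mod_eq_of_lt hb]
    have dv : ∀ a b, b < p → (p*a+b) / p = a := fun a b hb => by
      rw [Nat.mul_add_div hp.pos, Nat.div_eq_of_lt hb, add_zero]
    have small : ∀ a b, a < p → b ≤ a → ¬ p ∣ a.choose b := fun a b ha hb hd => by
      have h1 : p ∣ a.factorial := by
        rw [← Nat.choose_mul_factorial_mul_factorial hb]
        exact (hd.mul_right _).mul_right _
      have := (hp.dvd_factorial).mp h1
      omega
    have step : ∀ a b c d, c < p → d ≤ c → ¬ p ∣ a.choose b → ¬ p ∣ (p*a+c).choose (p*b+d) := by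
      intro a b c d hc hd hn hdv
      have := @Choose.choose_modEq_choose_mod_mul_choose_div_nat (p*a+c) (p*b+d) p _
      rw [md _ _ hc, md _ _ (by omega), dv _ _ hc, dv _ _ (by omega)] at this
      rcases (hp.dvd_mul).mp ((this.dvd_iff (dvd_refl p)).mp hdv) with h | h
      · exact small _ _ hc hd h
      · exact hn h
    rw [h5, h3]
    exact step _ _ _ _ (by omega) (by omega) (step _ _ _ _ (by omega) (by omega) ih')

section field
variable {F : Type*} [Field F] [Fintype F] [DecidableEq F]

/-- class defined through the power residue symbol -/
def Cl (α : F) (J i : ℕ) : Finset F := univ.filter (fun y => y ^ J = (α ^ J) ^ i)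

lemma mem_Cl {α : F} {J i : ℕ} {y : F} : y ∈ Cl α J i ↔ y ^ J = (α ^ J) ^ i := by
  simp [Cl]

lemma alpha_ne {α : F} (hα : IsPrimitiveElt α) {J : ℕ} (hJ : 0 < J)
    (hF : Fintype.card F = 8 * J + 1) : α ≠ 0 := by
  intro h0
  subst h0
  have : ∃ y : F, y ∉ ({0, 1} : Finset F) := by
    by_contra! h
    have h1 : (univ : Finset F) ⊆ {0, 1} := fun y _ => h y
    have h2 := card_le_card h1
    have h3 : ({0, 1} : Finset F).card ≤ 2 := card_le_two
    rw [card_univ, hF] at h2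
    omega
  obtain ⟨y, hy⟩ := this
  simp only [mem_insert, mem_singleton, not_or] at hy
  obtain ⟨n, hn⟩ := hα y hy.1
  rcases Nat.eq_zero_or_pos n with h | h
  · subst h; simp at hn; exact hy.2 hn.symm
  · rw [zero_pow h.ne'] at hn; exact hy.1 hn.symm

lemma gen_units {α : F} (hα : IsPrimitiveElt α) (h0 : α ≠ 0) :
    ∀ u : Fˣ, u ∈ Subgroup.zpowers (Units.mk0 α h0) := by
  intro u
  obtain ⟨n, hn⟩ := hα u u.ne_zero
  exact ⟨n, by ext; simpa using hn⟩

lemma order_alpha {α : F} (hα : IsPrimitiveElt α) {J : ℕ} (hJ : 0 < J)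
    (hF : Fintype.card F = 8 * J + 1) : orderOf α = 8 * J := by
  have h0 := alpha_ne hα hJ hF
  have h1 := orderOf_eq_card_of_forall_mem_zpowers (gen_units hα h0)
  rw [← orderOf_units] at h1
  rw [Units.val_mk0] at h1
  rw [h1, Nat.card_eq_fintype_card, Fintype.card_units, hF]
  rfl

lemma order_omega {α : F} (hα : IsPrimitiveElt α) {J : ℕ} (hJ : 0 < J)
    (hF : Fintype.card F = 8 * J + 1) : orderOf (α ^ J) = 8 := by
  have h := order_alpha hα hJ hF
  rw [orderOf_pow_of_dvd hJ.ne' (by rw [h]; exact Dvd.intro_left _ rfl), h]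
  exact Nat.mul_div_cancel _ hJ

lemma omega_pow_eq {α : F} (hα : IsPrimitiveElt α) {J : ℕ} (hJ : 0 < J)
    (hF : Fintype.card F = 8 * J + 1) (i k : ℕ) :
    (α ^ J) ^ i = (α ^ J) ^ k ↔ i % 8 = k % 8 := by
  have h0 : α ^ J ≠ 0 := pow_ne_zero _ (alpha_ne hα hJ hF)
  have ho : orderOf (Units.mk0 _ h0) = 8 := by
    rw [← orderOf_units, Units.val_mk0, order_omega hα hJ hF]
  have h1 := @pow_eq_pow_iff_modEq _ _ (Units.mk0 _ h0) k i
  rw [ho] at h1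
  have h2 : (α ^ J) ^ i = (α ^ J) ^ k ↔ (Units.mk0 _ h0) ^ i = (Units.mk0 _ h0) ^ k := by
    rw [Units.ext_iff]; simp
  rw [h2, h1]; rfl

lemma Cl_congr {α : F} (hα : IsPrimitiveElt α) {J : ℕ} (hJ : 0 < J)
    (hF : Fintype.card F = 8 * J + 1) {i k : ℕ} (h : i % 8 = k % 8) : Cl α J i = Cl α J k := by
  ext y
  rw [mem_Cl, mem_Cl, (omega_pow_eq hα hJ hF i k).mpr h]

lemma omega_four {α : F} (hα : IsPrimitiveElt α) {J : ℕ} (hJ : 0 < J)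
    (hF : Fintype.card F = 8 * J + 1) : (α ^ J) ^ 4 = -1 := by
  have h1 : ((α ^ J) ^ 4) ^ 2 = 1 := by
    rw [← pow_mul]
    have := (omega_pow_eq hα hJ hF 8 0).mpr rfl
    simpa using this
  rw [pow_two] at h1
  rcases mul_self_eq_one_iff.mp h1 with h | h
  · exfalso
    have := (omega_pow_eq hα hJ hF 4 0).mp (by simpa using h)
    omega
  · exact h

lemma cyc8_eq {α : F} (hα : IsPrimitiveElt α) {J : ℕ} (hJ : 0 < J)
    (hF : Fintype.card F = 8 * J + 1) (i : ℕ) (hi : i < 8) : cycClass α 8 i = Cl α J i := by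
  have ho := order_alpha hα hJ hF
  ext y
  simp only [cycClass, mem_image, mem_range, mem_Cl]
  constructor
  · rintro ⟨j, -, rfl⟩
    rw [← pow_mul, mul_comm (8 * j + i) J, pow_mul]
    exact (omega_pow_eq hα hJ hF _ _).mpr (by omega)
  · intro hy
    have hy0 : y ≠ 0 := by
      rintro rfl
      rw [zero_pow hJ.ne'] at hy
      exact pow_ne_zero _ (pow_ne_zero _ (alpha_ne hα hJ hF)) hy.symm
    obtain ⟨n, rfl⟩ := hα y hy0
    rw [← pow_mul, mul_comm n J, pow_mul] at hy
    have h8 := (omega_pow_eq hα hJ hF _ _).mp hy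
    have hlt : n % (8 * J) < 8 * J := Nat.mod_lt _ (by omega)
    have hm : n % (8 * J) % 8 = n % 8 := Nat.mod_mul_right_mod n 8 J
    refine ⟨n % (8 * J) / 8, by omega, ?_⟩
    rw [← pow_mod_orderOf α n, ho]
    congr 1
    omega

lemma cyc2_eq {α : F} (hα : IsPrimitiveElt α) {J : ℕ} (hJ : 0 < J)
    (hF : Fintype.card F = 8 * J + 1) : cycClass α 2 0 =
      (Cl α J 0 ∪ Cl α J 4) ∪ (Cl α J 2 ∪ Cl α J 6) := by
  have ho := order_alpha hα hJ hF
  ext y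
  simp only [cycClass, mem_image, mem_range, mem_union, mem_Cl]
  constructor
  · rintro ⟨j, -, rfl⟩
    rw [← pow_mul, mul_comm (2 * j + 0) J, pow_mul]
    simp only [omega_pow_eq hα hJ hF]
    omega
  · intro hy
    have hy0 : y ≠ 0 := by
      rintro rfl
      rw [zero_pow hJ.ne'] at hy
      have h := fun i => (pow_ne_zero i (pow_ne_zero J (alpha_ne hα hJ hF))).symm
      simp only [h, or_self] at hy
    obtain ⟨n, rfl⟩ := hα y hy0
    rw [← pow_mul, mul_comm n J, pow_mul] at hy
    simp only [omega_pow_eq hα hJ hF] at hy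
    have hlt : n % (8 * J) < 8 * J := Nat.mod_lt _ (by omega)
    have hm : n % (8 * J) % 8 = n % 8 := Nat.mod_mul_right_mod n 8 J
    refine ⟨n % (8 * J) / 2, by omega, ?_⟩
    rw [← pow_mod_orderOf α n, ho]
    congr 1
    omega

lemma zero_notMem_Cl {α : F} (hα : IsPrimitiveElt α) {J : ℕ} (hJ : 0 < J)
    (hF : Fintype.card F = 8 * J + 1) (i : ℕ) : (0 : F) ∉ Cl α J i := by
  rw [mem_Cl, zero_pow hJ.ne']
  exact (pow_ne_zero i (pow_ne_zero J (alpha_ne hα hJ hF))).symm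

lemma disj_Cl {α : F} (hα : IsPrimitiveElt α) {J : ℕ} (hJ : 0 < J)
    (hF : Fintype.card F = 8 * J + 1) (i k : ℕ) (h : i % 8 ≠ k % 8) :
    Disjoint (Cl α J i) (Cl α J k) := by
  rw [disjoint_left]
  intro y hy hy'
  rw [mem_Cl] at hy hy'
  exact h ((omega_pow_eq hα hJ hF _ _).mp (hy.symm.trans hy'))

/-- decompose a sum along the classes of `e y` -/
lemma sum_fiber {α : F} (hα : IsPrimitiveElt α) {J : ℕ} (hJ : 0 < J)
    (hF : Fintype.card F = 8 * J + 1) {R : Type*} [AddCommMonoid R] (e : F → F) (g : F → R) :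
    ∑ y, g y = ∑ y with e y = 0, g y + ∑ i ∈ range 8, ∑ y with e y ∈ Cl α J i, g y := by
  rw [← sum_filter_add_sum_filter_not univ (fun y => e y = 0) g]
  congr 1
  rw [← sum_biUnion]
  · apply sum_congr _ (fun _ _ => rfl)
    ext y
    simp only [mem_filter, mem_univ, true_and, mem_biUnion, mem_range]
    constructor
    · intro hy
      obtain ⟨n, hn⟩ := hα _ hy
      refine ⟨n % 8, Nat.mod_lt _ (by norm_num), ?_⟩
      rw [mem_Cl, ← hn, ← pow_mul, mul_comm n J, pow_mul]
      exact (omega_pow_eq hα hJ hF _ _).mpr (by omega)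
    · rintro ⟨i, -, hi⟩ h0
      rw [h0] at hi
      exact zero_notMem_Cl hα hJ hF i hi
  · intro i hi k hk hik
    simp only [coe_range, Set.mem_Iio] at hi hk
    rw [Function.onFun, disjoint_left]
    intro y hy hy'
    simp only [mem_filter, mem_univ, true_and] at hy hy'
    exact disjoint_left.mp (disj_Cl hα hJ hF i k (by omega)) hy hy'

lemma mul_Cl {α : F} (hα : IsPrimitiveElt α) {J : ℕ} (hJ : 0 < J)
    (hF : Fintype.card F = 8 * J + 1) {R : Type*} [AddCommMonoid R] (f : F → R) (i j : ℕ) :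
    ∑ y ∈ Cl α J i, f (α ^ j * y) = ∑ y ∈ Cl α J (i + j), f y := by
  have h0 : α ^ j ≠ 0 := pow_ne_zero _ (alpha_ne hα hJ hF)
  refine sum_bij (fun y _ => α ^ j * y) ?_ ?_ ?_ ?_
  · intro y hy
    rw [mem_Cl] at *
    rw [mul_pow, hy, pow_add, ← pow_mul, mul_comm j J, pow_mul, mul_comm]
  · intro y _ z _ h
    exact mul_left_cancel₀ h0 h
  · intro z hz
    refine ⟨(α ^ j)⁻¹ * z, ?_, by field_simp⟩
    rw [mem_Cl] at *
    rw [mul_pow, hz, pow_add, inv_pow, ← pow_mul, mul_comm j J, pow_mul]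
    have h1 : (α ^ J) ^ j ≠ 0 := pow_ne_zero _ (pow_ne_zero _ (alpha_ne hα hJ hF))
    field_simp
  · intros; rfl

lemma card_Cl {α : F} (hα : IsPrimitiveElt α) {J : ℕ} (hJ : 0 < J)
    (hF : Fintype.card F = 8 * J + 1) (i : ℕ) : (Cl α J i).card = J := by
  have h1 : ∀ i, (Cl α J i).card = (Cl α J 0).card := by
    intro i
    have := mul_Cl hα hJ hF (fun _ => 1) 0 i
    simp only [sum_const, smul_eq_mul, mul_one, zero_add] at this
    exact this.symm
  have h2 := sum_fiber hα hJ hF id (fun _ => 1)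
  simp only [sum_const, smul_eq_mul, mul_one, id, card_univ, hF] at h2
  have h3 : ∀ i, (univ.filter (fun y => y ∈ Cl α J i)).card = (Cl α J 0).card := by
    intro i; rw [← h1 i]; congr 1; ext; simp
  have h4 : (univ.filter (fun y : F => y = 0)).card = 1 := by
    rw [card_eq_one]; exact ⟨0, by ext; simp⟩
  simp only [h3, h4, sum_const, card_range, smul_eq_mul] at h2
  rw [h1 i]; omega

lemma frob_card {α : F} {J : ℕ} (hα : IsPrimitiveElt α) (hJ : 0 < J)
    (hF : Fintype.card F = 8 * J + 1) (p : ℕ) [Fact p.Prime] [CharP F p] (hp8 : p % 8 = 3)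
    {R : Type*} [AddCommMonoid R] (e : F → F) (he : ∀ y, e (y ^ p) = e y ^ p)
    (f : F → R) (hf : ∀ y, f (y ^ p) = f y) (i : ℕ) :
    ∑ y with e y ∈ Cl α J i, f y = ∑ y with e y ∈ Cl α J (3 * i), f y := by
  rw [← Cl_congr hα hJ hF (show (i * p) % 8 = (3 * i) % 8 by
    rw [Nat.mul_mod, hp8]; omega)]
  have hinj : Function.Injective (fun y : F => y ^ p) := frobenius_inj F p
  have hbij : Function.Bijective (fun y : F => y ^ p) := Finite.injective_iff_bijective.mp hinj
  refine sum_bij (fun y _ => y ^ p) ?_ (fun y _ z _ h => hinj h) ?_ (fun y _ => (hf y).symm)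
  · intro y hy
    simp only [mem_filter, mem_univ, true_and, mem_Cl] at *
    rw [he, ← pow_mul, mul_comm p J, pow_mul, hy, ← pow_mul]
  · intro z hz
    obtain ⟨y, rfl⟩ := hbij.2 z
    refine ⟨y, ?_, rfl⟩
    simp only [mem_filter, mem_univ, true_and, mem_Cl] at *
    rw [he, ← pow_mul, mul_comm p J, pow_mul, pow_mul _ i p] at hz
    exact hinj hz

end field

section counts
variable {F : Type*} [Field F] [Fintype F] [DecidableEq F]

/-- number of `y` with `y (1 - y)` in the class `i` -/
def Nn (α : F) (J i : ℕ) : ℕ := (univ.filter (fun y : F => y * (1 - y) ∈ Cl α J i)).card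

lemma Nn_frob {α : F} {J : ℕ} (hα : IsPrimitiveElt α) (hJ : 0 < J)
    (hF : Fintype.card F = 8 * J + 1) (p : ℕ) [Fact p.Prime] [CharP F p] (hp8 : p % 8 = 3)
    (i : ℕ) : Nn α J i = Nn α J (3 * i) := by
  have := frob_card hα hJ hF p hp8 (fun y => y * (1 - y))
    (fun y => by rw [mul_pow, sub_pow_char, one_pow]) (fun _ => (1 : ℕ)) (fun _ => rfl) i
  simpa [Nn] using this

lemma Nn_congr {α : F} (hα : IsPrimitiveElt α) {J : ℕ} (hJ : 0 < J)
    (hF : Fintype.card F = 8 * J + 1) {i k : ℕ} (h : i % 8 = k % 8) : Nn α J i = Nn α J k := by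
  rw [Nn, Nn, Cl_congr hα hJ hF h]

lemma Nn_sum {α : F} {J : ℕ} (hα : IsPrimitiveElt α) (hJ : 0 < J)
    (hF : Fintype.card F = 8 * J + 1) : 2 + ∑ i ∈ range 8, Nn α J i = 8 * J + 1 := by
  have := sum_fiber hα hJ hF (fun y => y * (1 - y)) (fun _ => (1 : ℕ))
  simp only [sum_const, smul_eq_mul, mul_one, card_univ, hF] at this
  rw [this]
  congr 1
  symm
  rw [card_eq_two]
  refine ⟨0, 1, zero_ne_one, ?_⟩
  ext y
  simp only [mem_filter, mem_univ, true_and, mem_insert, mem_singleton, mul_eq_zero, sub_eq_zero]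
  rw [eq_comm (a := (1 : F))]

lemma four_pow {J : ℕ} (p n : ℕ) [Fact p.Prime] [CharP F p] (hp8 : p % 8 = 3)
    (hq : 8 * J + 1 = p ^ (2 * n)) : (4 : F) ^ J = 1 := by
  have hdvd : p - 1 ∣ 2 * J := by
    obtain ⟨k, hk⟩ : ∃ k, p = 8 * k + 3 := ⟨p / 8, by omega⟩
    have h1 : p ^ 2 - 1 ∣ (p ^ 2) ^ n - 1 ^ n := Nat.sub_dvd_pow_sub_pow _ _ _
    rw [← pow_mul, ← hq, one_pow, Nat.add_sub_cancel] at h1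
    have h2 : p ^ 2 - 1 = 4 * ((p - 1) * (2 * k + 1)) := by
      rw [hk]
      have : (8 * k + 3) ^ 2 = 4 * ((8 * k + 3 - 1) * (2 * k + 1)) + 1 := by
        have : 8 * k + 3 - 1 = 8 * k + 2 := rfl
        rw [this]; ring
      omega
    rw [h2, show 8 * J = 4 * (2 * J) by ring] at h1
    exact (Dvd.intro _ rfl).trans (Nat.dvd_of_mul_dvd_mul_left (by norm_num) h1)
  have h20 : (2 : ZMod p) ≠ 0 := by
    intro h
    have : ((2 : ℕ) : ZMod p) = 0 := by exact_mod_cast h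
    rw [ZMod.natCast_eq_zero_iff] at this
    have := Nat.le_of_dvd (by norm_num) this
    have := (Fact.out : p.Prime).two_le
    omega
  have h3 : (2 : ZMod p) ^ (2 * J) = 1 := by
    obtain ⟨c, hc⟩ := hdvd
    rw [hc, pow_mul, ZMod.pow_card_sub_one_eq_one h20, one_pow]
  have h4 := congrArg (ZMod.castHom (dvd_refl p) F) h3
  rw [map_pow, map_one, map_ofNat, pow_mul] at h4
  norm_num at h4
  exact h4

lemma Nn_even {α : F} {J : ℕ} (hα : IsPrimitiveElt α) (hJ : 0 < J)
    (hF : Fintype.card F = 8 * J + 1) (p n : ℕ) [Fact p.Prime] [CharP F p] (hp8 : p % 8 = 3)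
    (hq : 8 * J + 1 = p ^ (2 * n)) (i : ℕ) (hi : i % 8 ≠ 0) : Nn α J i % 2 = 0 := by
  have h2 : ((Nn α J i : ℕ) : ZMod 2) = 0 := by
    rw [Nn, card_eq_sum_ones, Nat.cast_sum]
    refine sum_involution (fun y _ => 1 - y) ?_ ?_ ?_ ?_
    · intros; decide
    · intro y hy _ h
      simp only [mem_filter, mem_univ, true_and, mem_Cl] at hy
      rw [h] at hy
      have h2y : 2 * y = 1 := by linear_combination -h
      have h4 : (4 : F) * (y * y) = 1 := by linear_combination (2 * y + 1) * h2y
      have h5 : (4 : F) ^ J * (y * y) ^ J = 1 := by rw [← mul_pow, h4, one_pow]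
      rw [four_pow p n hp8 hq, one_mul, hy] at h5
      have := (omega_pow_eq hα hJ hF i 0).mp (by simpa using h5)
      omega
    · intro y hy
      simp only [mem_filter, mem_univ, true_and] at *
      convert hy using 1; ring
    · intro y _; ring
  rw [ZMod.natCast_eq_zero_iff] at h2
  omega

lemma sum_pow_F {J : ℕ} (hJ : 0 < J) (hF : Fintype.card F = 8 * J + 1) (k : ℕ) (hk : 0 < k) :
    ∑ y : F, y ^ k = if 8 * J ∣ k then -1 else 0 := by
  have h := FiniteField.sum_pow_units F k
  rw [hF, Nat.add_sub_cancel] at h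
  rw [← h]
  symm
  rw [← sum_erase (f := fun y : F => y ^ k) univ (show (0 : F) ^ k = 0 from zero_pow hk.ne')]
  refine sum_bij (fun u _ => (u : F)) ?_ ?_ ?_ ?_
  · intro u _; simp
  · intro u _ v _ h; exact Units.ext h
  · intro y hy; exact ⟨Units.mk0 y (by simpa using hy), mem_univ _, rfl⟩
  · intros; rfl

lemma sum_five {J : ℕ} (hJ : 0 < J) (hF : Fintype.card F = 8 * J + 1) :
    ∑ y : F, (y * (1 - y)) ^ (5 * J) = - ((-1) ^ (3 * J) * ((5 * J).choose (3 * J) : F)) := by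
  have h1 : ∀ y : F, (y * (1 - y)) ^ (5 * J) = ∑ k ∈ range (5 * J + 1),
      ((-1) ^ k * ((5 * J).choose k : F)) * y ^ (5 * J + k) := by
    intro y
    rw [mul_pow, show (1 - y) = (-y) + 1 by ring, add_pow, mul_sum]
    refine sum_congr rfl (fun k _ => ?_)
    rw [neg_pow, one_pow, pow_add]; ring
  simp_rw [h1]
  rw [sum_comm]
  simp_rw [← mul_sum]
  rw [sum_eq_single (3 * J)]
  · rw [sum_pow_F hJ hF _ (by omega), if_pos ⟨1, by ring⟩]; ring
  · intro k hk hne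
    rw [mem_range] at hk
    rw [sum_pow_F hJ hF _ (by omega), if_neg, mul_zero]
    rintro ⟨c, hc⟩
    have h1 : c < 2 := by
      by_contra! h
      have : 8 * J * 2 ≤ 8 * J * c := Nat.mul_le_mul_left _ h
      omega
    have h2 : 0 < c := by
      rcases Nat.eq_zero_or_pos c with h | h
      · subst h; omega
      · exact h
    have h3 : c = 1 := by omega
    subst h3; omega
  · intro h; exfalso; apply h; rw [mem_range]; omega

lemma ndvd_ab {α : F} {J : ℕ} (hα : IsPrimitiveElt α) (hJ : 0 < J)
    (hF : Fintype.card F = 8 * J + 1) (p n : ℕ) [Fact p.Prime] [CharP F p] (hp8 : p % 8 = 3)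
    (hq : 8 * J + 1 = p ^ (2 * n)) (ha : (p : ℤ) ∣ (Nn α J 0 : ℤ) - Nn α J 4)
    (hb : (p : ℤ) ∣ (Nn α J 1 : ℤ) - Nn α J 5) : False := by
  have h1 := sum_five hJ hF
  have hne : ∑ y : F, (y * (1 - y)) ^ (5 * J) ≠ 0 := by
    rw [h1, neg_ne_zero]
    refine mul_ne_zero (pow_ne_zero _ (neg_ne_zero.mpr one_ne_zero)) ?_
    intro h
    rw [CharP.cast_eq_zero_iff F p] at h
    exact choose_ndvd p Fact.out hp8 n J hq h
  apply hne
  rw [sum_fiber hα hJ hF (fun y => y * (1 - y))]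
  rw [sum_eq_zero, zero_add]
  · have h2 : ∀ i, ∑ y with y * (1 - y) ∈ Cl α J i, (y * (1 - y)) ^ (5 * J)
        = (Nn α J i : F) * ((α ^ J) ^ i) ^ 5 := by
      intro i
      rw [Nn, ← nsmul_eq_mul, ← sum_const]
      refine sum_congr rfl (fun y hy => ?_)
      simp only [mem_filter, mem_univ, true_and, mem_Cl] at hy
      rw [mul_comm 5 J, pow_mul, hy]
    simp_rw [h2]
    have e3 : Nn α J 3 = Nn α J 1 := (Nn_frob hα hJ hF p hp8 1).symm
    have e6 : Nn α J 6 = Nn α J 2 := (Nn_frob hα hJ hF p hp8 2).symm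
    have e7 : Nn α J 7 = Nn α J 5 := by
      rw [Nn_frob hα hJ hF p hp8 5]; exact Nn_congr hα hJ hF rfl
    have hw := omega_four hα hJ hF
    set w := α ^ J
    have c1 : (Nn α J 0 : F) = Nn α J 4 := by
      have := (CharP.intCast_eq_zero_iff F p _).mpr ha
      push_cast at this; exact sub_eq_zero.mp this
    have c2 : (Nn α J 1 : F) = Nn α J 5 := by
      have := (CharP.intCast_eq_zero_iff F p _).mpr hb
      push_cast at this; exact sub_eq_zero.mp this
    simp only [sum_range_succ, range_zero, sum_empty, e3, e6, e7, c1, c2]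
    have w4 : ∀ k, w ^ (k + 4) = - w ^ k := fun k => by rw [pow_add, hw]; ring
    simp only [← pow_mul]
    norm_num [w4]
    ring_nf
  · intro y hy
    simp only [mem_filter, mem_univ, true_and] at hy
    rw [hy, zero_pow (by omega)]

lemma ab_mod {α : F} {J : ℕ} (hα : IsPrimitiveElt α) (hJ : 0 < J) 
    (hF : Fintype.card F = 8 * J + 1) (p n : ℕ) [Fact p.Prime] [CharP F p] (hp8 : p % 8 = 3)
    (hq : 8 * J + 1 = p ^ (2 * n)) : ((Nn α J 0 : ℤ) - Nn α J 4) % 4 = 3 := by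
  have e3 : Nn α J 3 = Nn α J 1 := (Nn_frob hα hJ hF p hp8 1).symm
  have e6 : Nn α J 6 = Nn α J 2 := (Nn_frob hα hJ hF p hp8 2).symm
  have e7 : Nn α J 7 = Nn α J 5 := by
    rw [Nn_frob hα hJ hF p hp8 5]; exact Nn_congr hα hJ hF rfl
  have h := Nn_sum hα hJ hF
  simp only [sum_range_succ, range_zero, sum_empty, e3, e6, e7] at h
  have h1 := Nn_even hα hJ hF p n hp8 hq 1 (by norm_num)
  have h2 := Nn_even hα hJ hF p n hp8 hq 2 (by norm_num)
  have h4 := Nn_even hα hJ hF p n hp8 hq 4 (by norm_num)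
  have h5 := Nn_even hα hJ hF p n hp8 hq 5 (by norm_num)
  omega

end counts

section chars
variable {F : Type*} [Field F] [Fintype F] [DecidableEq F]

lemma exists_psi (p : ℕ) [Fact p.Prime] [CharP F p] : ∃ ψ : AddChar F ℂ, ψ.IsPrimitive ∧
    (∀ y, ψ (y ^ p) = ψ y) ∧ ∀ y, IsIntegral ℤ (ψ y) := by
  let _ : Algebra (ZMod p) F := ZMod.algebra _ _
  let ψ' : AddChar F ℂ :=
    (ZMod.stdAddChar (N := p)).compAddMonoidHom (Algebra.trace (ZMod p) F).toAddMonoidHom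
  have hap : ∀ y, ψ' y = ZMod.stdAddChar (Algebra.trace (ZMod p) F y) := fun _ => rfl
  refine ⟨ψ', ?_, ?_, ?_⟩
  · apply AddChar.IsPrimitive.of_ne_one
    obtain ⟨a, ha⟩ := Algebra.trace_surjective (ZMod p) F 1
    refine AddChar.ne_one_iff.2 ⟨a, fun hf => ?_⟩
    rw [hap, ha, ← (ZMod.stdAddChar (N := p)).map_zero_eq_one,
      ZMod.injective_stdAddChar.eq_iff] at hf
    exact one_ne_zero hf
  · intro y
    rw [hap, hap]
    congr 1
    have := Algebra.trace_eq_of_algEquiv (FiniteField.frobeniusAlgEquivOfAlgebraic (ZMod p) F) y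
    simpa [ZMod.card] using this
  · intro y
    refine IsIntegral.of_pow (n := p) (Fact.out : p.Prime).pos ?_
    rw [← AddChar.map_nsmul_eq_pow, nsmul_eq_mul, CharP.cast_eq_zero, zero_mul,
      AddChar.map_zero_eq_one]
    exact isIntegral_one

lemma exists_chi {α : F} {J : ℕ} (hα : IsPrimitiveElt α) (hJ : 0 < J)
    (hF : Fintype.card F = 8 * J + 1) (ζ : ℂ) (hζ : ζ ^ 8 = 1) :
    ∃ χ : MulChar F ℂ, χ α = ζ := by
  have h0 : ζ ≠ 0 := by rintro rfl; norm_num at hζ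
  have ha := alpha_ne hα hJ hF
  have hmem : Units.mk0 ζ h0 ∈ rootsOfUnity (Fintype.card Fˣ) ℂ := by
    rw [mem_rootsOfUnity, Fintype.card_units, hF, Nat.add_sub_cancel]
    ext
    simp [pow_mul, hζ]
  refine ⟨MulChar.ofRootOfUnity hmem (gen_units hα ha), ?_⟩
  exact MulChar.ofRootOfUnity_spec hmem (gen_units hα ha)

lemma chi_Cl {α : F} {J : ℕ} (hα : IsPrimitiveElt α) (hJ : 0 < J)
    (hF : Fintype.card F = 8 * J + 1) {ζ : ℂ} (hζ : ζ ^ 8 = 1) {χ : MulChar F ℂ}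
    (hχ : χ α = ζ) {y : F} {i : ℕ} (hy : y ∈ Cl α J i) : χ y = ζ ^ i := by
  have hy0 : y ≠ 0 := fun h => zero_notMem_Cl hα hJ hF i (h ▸ hy)
  obtain ⟨n, rfl⟩ := hα y hy0
  rw [mem_Cl, ← pow_mul, mul_comm n J, pow_mul, omega_pow_eq hα hJ hF] at hy
  rw [map_pow, hχ, ← Nat.div_add_mod n 8, ← Nat.div_add_mod i 8, hy, pow_add, pow_add, pow_mul,
    pow_mul, hζ, one_pow, one_pow]

/-- Gaussian periods -/
noncomputable def eta (ψ : AddChar F ℂ) (α : F) (J i : ℕ) : ℂ := ∑ y ∈ Cl α J i, ψ y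

/-- Gauss sums in terms of periods -/
noncomputable def GG (ψ : AddChar F ℂ) (α : F) (J : ℕ) (ζ : ℂ) : ℂ :=
  ∑ i ∈ range 8, ζ ^ i * eta ψ α J i

lemma gauss_eq {α : F} {J : ℕ} (hα : IsPrimitiveElt α) (hJ : 0 < J)
    (hF : Fintype.card F = 8 * J + 1) (ψ : AddChar F ℂ) {ζ : ℂ} (hζ : ζ ^ 8 = 1)
    {χ : MulChar F ℂ} (hχ : χ α = ζ) : gaussSum χ ψ = GG ψ α J ζ := by
  rw [gaussSum, sum_fiber hα hJ hF id, sum_eq_zero, zero_add]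
  · refine sum_congr rfl (fun i _ => ?_)
    rw [eta, mul_sum]
    have : univ.filter (fun y => id y ∈ Cl α J i) = Cl α J i := by ext; simp
    rw [this]
    exact sum_congr rfl (fun y hy => by rw [chi_Cl hα hJ hF hζ hχ hy])
  · intro y hy
    simp only [mem_filter, mem_univ, true_and, id] at hy
    rw [hy, MulChar.map_zero, zero_mul]

lemma jac_eq {α : F} {J : ℕ} (hα : IsPrimitiveElt α) (hJ : 0 < J)
    (hF : Fintype.card F = 8 * J + 1) {ζ : ℂ} (hζ : ζ ^ 8 = 1)
    {χ : MulChar F ℂ} (hχ : χ α = ζ) : jacobiSum χ χ = ∑ i ∈ range 8, ζ ^ i * Nn α J i := by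
  rw [jacobiSum, sum_fiber hα hJ hF (fun y => y * (1 - y)), sum_eq_zero, zero_add]
  · refine sum_congr rfl (fun i _ => ?_)
    rw [Nn, mul_comm, ← nsmul_eq_mul, ← sum_const]
    refine sum_congr rfl (fun y hy => ?_)
    simp only [mem_filter, mem_univ, true_and] at hy
    rw [← map_mul, chi_Cl hα hJ hF hζ hχ hy]
  · intro y hy
    simp only [mem_filter, mem_univ, true_and] at hy
    rw [← map_mul, hy, MulChar.map_zero]

lemma neg_one_mem {α : F} {J : ℕ} (hα : IsPrimitiveElt α) (hJ : 0 < J)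
    (hF : Fintype.card F = 8 * J + 1) (hodd : J % 2 = 1) : (-1 : F) ∈ Cl α J 4 := by
  rw [mem_Cl, omega_four hα hJ hF, Odd.neg_one_pow (Nat.odd_iff.mpr hodd)]

lemma GG_norm {α : F} {J : ℕ} (hα : IsPrimitiveElt α) (hJ : 0 < J)
    (hF : Fintype.card F = 8 * J + 1) (hodd : J % 2 = 1) {ψ : AddChar F ℂ}
    (hψ : ψ.IsPrimitive) {ζ : ℂ} (hζ : ζ ^ 8 = 1) (h1 : ζ ≠ 1) :
    GG ψ α J ζ * GG ψ α J (ζ ^ 7) = ζ ^ 4 * (8 * J + 1) := by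
  obtain ⟨χ, hχ⟩ := exists_chi hα hJ hF ζ hζ
  have h0 : ζ ≠ 0 := by rintro rfl; norm_num at hζ
  have hn : χ ≠ 1 := by
    rintro rfl
    rw [MulChar.one_apply (IsUnit.mk0 _ (alpha_ne hα hJ hF))] at hχ
    exact h1 hχ.symm
  have h7 : (ζ ^ 7) ^ 8 = 1 := by rw [← pow_mul, mul_comm, pow_mul, hζ, one_pow]
  have hi : χ⁻¹ α = ζ ^ 7 := by
    rw [MulChar.inv_apply_eq_inv', hχ]
    field_simp
    exact hζ.symm
  have e1 := gaussSum_mul_gaussSum_eq_card hn hψ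
  have e2 := mul_gaussSum_inv_eq_gaussSum χ⁻¹ ψ
  rw [chi_Cl hα hJ hF h7 hi (neg_one_mem hα hJ hF hodd), gauss_eq hα hJ hF ψ h7 hi] at e2
  rw [gauss_eq hα hJ hF ψ hζ hχ, hF] at e1
  push_cast at e1
  rw [← e1, ← e2]
  have : (ζ ^ 7) ^ 4 = ζ ^ 4 := by
    calc (ζ ^ 7) ^ 4 = (ζ ^ 8) ^ 3 * ζ ^ 4 := by ring
      _ = _ := by rw [hζ]; ring
  rw [this]; ring

lemma GG_jac {α : F} {J : ℕ} (hα : IsPrimitiveElt α) (hJ : 0 < J)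
    (hF : Fintype.card F = 8 * J + 1) (ψ : AddChar F ℂ)
    {ζ : ℂ} (hζ : ζ ^ 8 = 1) (h1 : ζ ^ 2 ≠ 1) :
    GG ψ α J (ζ ^ 2) * ∑ i ∈ range 8, ζ ^ i * Nn α J i = GG ψ α J ζ ^ 2 := by
  obtain ⟨χ, hχ⟩ := exists_chi hα hJ hF ζ hζ
  have h2 : (χ * χ) α = ζ ^ 2 := by rw [MulChar.mul_apply, hχ]; ring
  have hn : χ * χ ≠ 1 := by
    intro h
    rw [h, MulChar.one_apply (IsUnit.mk0 _ (alpha_ne hα hJ hF))] at h2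
    exact h1 h2.symm
  have e := jacobiSum_mul_nontrivial hn ψ
  have h8 : (ζ ^ 2) ^ 8 = 1 := by rw [← pow_mul, mul_comm, pow_mul, hζ, one_pow]
  rw [gauss_eq hα hJ hF ψ hζ hχ, gauss_eq hα hJ hF ψ h8 h2, jac_eq hα hJ hF hζ hχ] at e
  rw [e]; ring

lemma eta_congr {α : F} (hα : IsPrimitiveElt α) {J : ℕ} (hJ : 0 < J)
    (hF : Fintype.card F = 8 * J + 1) (ψ : AddChar F ℂ) {i k : ℕ} (h : i % 8 = k % 8) :
    eta ψ α J i = eta ψ α J k := by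
  rw [eta, eta, Cl_congr hα hJ hF h]

lemma eta_frob {α : F} {J : ℕ} (hα : IsPrimitiveElt α) (hJ : 0 < J)
    (hF : Fintype.card F = 8 * J + 1) (p : ℕ) [Fact p.Prime] [CharP F p] (hp8 : p % 8 = 3)
    (ψ : AddChar F ℂ) (hψ : ∀ y, ψ (y ^ p) = ψ y)
    (i : ℕ) : eta ψ α J i = eta ψ α J (3 * i) := by
  have := frob_card hα hJ hF p hp8 id (fun y => rfl) ψ hψ i
  simpa [eta] using this

lemma eta_sum {α : F} {J : ℕ} (hα : IsPrimitiveElt α) (hJ : 0 < J)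
    (hF : Fintype.card F = 8 * J + 1) {ψ : AddChar F ℂ} (hψ : ψ.IsPrimitive) :
    ∑ i ∈ range 8, eta ψ α J i = -1 := by
  have h := AddChar.sum_mulShift (1 : F) hψ
  rw [if_neg one_ne_zero] at h
  simp only [mul_one] at h
  rw [sum_fiber hα hJ hF id] at h
  have h0 : univ.filter (fun y : F => id y = 0) = {0} := by ext; simp
  rw [h0, sum_singleton, AddChar.map_zero_eq_one] at h
  have : ∀ i, univ.filter (fun y => id y ∈ Cl α J i) = Cl α J i := by intro i; ext; simp
  simp only [this] at h
  simp only [eta]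
  push_cast at h
  linear_combination h

lemma eta_int {α : F} {J : ℕ} {ψ : AddChar F ℂ} (hψ : ∀ y, IsIntegral ℤ (ψ y)) (i : ℕ) :
    IsIntegral ℤ (eta ψ α J i) := IsIntegral.sum _ (fun y _ => hψ y)

lemma int_of_integral (z : ℂ) (hz : IsIntegral ℤ z) (n d : ℤ) (hd : d ≠ 0)
    (h : (d : ℂ) * z = n) : d ∣ n := by
  have hz' : z = ((n / d : ℚ) : ℂ) := by
    push_cast
    rw [eq_div_iff (by exact_mod_cast hd), mul_comm]; exact h
  have h1 : IsIntegral ℤ ((n / d : ℚ)) := by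
    rw [hz'] at hz
    exact (isIntegral_algebraMap_iff (algebraMap ℚ ℂ).injective).mp hz
  obtain ⟨k, hk⟩ := IsIntegrallyClosed.isIntegral_iff.mp h1
  refine ⟨k, ?_⟩
  have : (k : ℚ) = n / d := by simpa using hk
  rw [eq_div_iff (by exact_mod_cast hd)] at this
  have h2 : k * d = n := by exact_mod_cast this
  linarith

end chars

section core
variable {F : Type*} [Field F] [Fintype F] [DecidableEq F]

lemma GG_odd (ψ : AddChar F ℂ) (α : F) (J : ℕ) (h3 : eta ψ α J 3 = eta ψ α J 1)
    (h6 : eta ψ α J 6 = eta ψ α J 2) (h7 : eta ψ α J 7 = eta ψ α J 5) (ζ : ℂ)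
    (hζ : ζ ^ 4 = -1) : GG ψ α J ζ = (eta ψ α J 0 - eta ψ α J 4) +
      (ζ + ζ ^ 3) * (eta ψ α J 1 - eta ψ α J 5) := by
  simp only [GG, sum_range_succ, range_zero, sum_empty, h3, h6, h7]
  linear_combination (eta ψ α J 4 + (ζ + ζ ^ 3) * eta ψ α J 5 + ζ ^ 2 * eta ψ α J 2) * hζ

lemma GG_four (ψ : AddChar F ℂ) (α : F) (J : ℕ) (h3 : eta ψ α J 3 = eta ψ α J 1)
    (h6 : eta ψ α J 6 = eta ψ α J 2) (h7 : eta ψ α J 7 = eta ψ α J 5) (ζ : ℂ)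
    (hζ : ζ ^ 2 = -1) : GG ψ α J ζ = eta ψ α J 0 + eta ψ α J 4 - 2 * eta ψ α J 2 := by
  simp only [GG, sum_range_succ, range_zero, sum_empty, h3, h6, h7]
  linear_combination (eta ψ α J 2 * (1 + (ζ ^ 4 - ζ ^ 2 + 1)) + ζ * eta ψ α J 1 +
    (ζ ^ 2 - 1) * eta ψ α J 4 + ζ * ζ ^ 4 * eta ψ α J 5) * hζ

lemma periods {α : F} {J : ℕ} (hα : IsPrimitiveElt α) (hJ : 0 < J)
    (hF : Fintype.card F = 8 * J + 1) (hodd : J % 2 = 1)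
    (p n : ℕ) (hn : n ≠ 0) [Fact p.Prime] [CharP F p] (hp8 : p % 8 = 3)
    (hq : 8 * J + 1 = p ^ (2 * n)) {ψ : AddChar F ℂ} (hψ : ψ.IsPrimitive)
    (hψp : ∀ y, ψ (y ^ p) = ψ y) (hψi : ∀ y, IsIntegral ℤ (ψ y))
    (X b : ℤ) (hX : X ^ 2 = 8 * J + 1) (hX0 : 0 < X) (hX16 : X % 16 = 3)
    (hXb : X ^ 2 = (X - 2) ^ 2 + 2 * b ^ 2) :
    eta ψ α J 3 = eta ψ α J 1 ∧ eta ψ α J 6 = eta ψ α J 2 ∧ eta ψ α J 7 = eta ψ α J 5 ∧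
    4 * (eta ψ α J 0 + eta ψ α J 4) = - X - 1 ∧ 8 * eta ψ α J 2 = 3 * X - 1 ∧
    4 * (eta ψ α J 1 + eta ψ α J 5) = - X - 1 ∧ (eta ψ α J 0 - eta ψ α J 4) ^ 2 = - X ∧
    2 * (eta ψ α J 1 - eta ψ α J 5) ^ 2 = X - X ^ 2 := by
  have hpr : p.Prime := Fact.out
  have h3 : eta ψ α J 3 = eta ψ α J 1 := (eta_frob hα hJ hF p hp8 ψ hψp 1).symm
  have h6 : eta ψ α J 6 = eta ψ α J 2 := (eta_frob hα hJ hF p hp8 ψ hψp 2).symm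
  have h7 : eta ψ α J 7 = eta ψ α J 5 := by
    rw [eta_frob hα hJ hF p hp8 ψ hψp 5]; exact eta_congr hα hJ hF ψ rfl
  refine ⟨h3, h6, h7, ?_⟩
  have hsum := eta_sum hα hJ hF hψ
  simp only [sum_range_succ, range_zero, sum_empty, h3, h6, h7] at hsum
  have hXC : (X : ℂ) ^ 2 = 8 * J + 1 := by exact_mod_cast hX
  have hXC0 : (X : ℂ) ≠ 0 := by exact_mod_cast hX0.ne'
  have g2 := GG_norm hα hJ hF hodd hψ (ζ := -1) (by norm_num) (by norm_num)
  rw [show (-1 : ℂ) ^ 7 = -1 by norm_num] at g2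
  simp only [GG, sum_range_succ, range_zero, sum_empty, h3, h6, h7] at g2
  obtain ⟨ζ, hζ⟩ := IsAlgClosed.exists_pow_nat_eq (-1 : ℂ) (n := 4) (by norm_num)
  have hm4 : (-ζ) ^ 4 = -1 := by rw [← hζ]; ring
  have hz8 : ζ ^ 8 = 1 := by linear_combination (ζ ^ 4 - 1) * hζ
  have hm8 : (-ζ) ^ 8 = 1 := by linear_combination (ζ ^ 4 - 1) * hζ
  have hi2 : (ζ ^ 2) ^ 2 = -1 := by rw [← hζ]; ring
  have hi1 : ζ ^ 2 ≠ 1 := by intro h; rw [h] at hi2; norm_num at hi2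
  have hi8 : (ζ ^ 2) ^ 8 = 1 := by linear_combination (ζ ^ 12 - ζ ^ 8 + ζ ^ 4 - 1) * hζ
  have hz1 : ζ ≠ 1 := by rintro rfl; norm_num at hζ
  -- order four
  have g4 := GG_norm hα hJ hF hodd hψ hi8 hi1
  rw [GG_four ψ α J h3 h6 h7 _ hi2, GG_four ψ α J h3 h6 h7 ((ζ ^ 2) ^ 7)
    (by linear_combination (ζ ^ 24 - ζ ^ 20 + ζ ^ 16 - ζ ^ 12 + ζ ^ 8 - ζ ^ 4 + 1) * hζ)] at g4
  -- order eight
  have g8 := GG_norm hα hJ hF hodd hψ hz8 hz1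
  rw [GG_odd ψ α J h3 h6 h7 _ hζ, GG_odd ψ α J h3 h6 h7 (ζ ^ 7)
    (by linear_combination (ζ ^ 24 - ζ ^ 20 + ζ ^ 16 - ζ ^ 12 + ζ ^ 8 - ζ ^ 4 + 1) * hζ)] at g8
  have j1 := GG_jac hα hJ hF ψ hz8 hi1
  have j2 := GG_jac hα hJ hF ψ hm8 (by rwa [neg_sq])
  rw [neg_sq] at j2
  rw [GG_four ψ α J h3 h6 h7 _ hi2, GG_odd ψ α J h3 h6 h7 _ hζ] at j1
  rw [GG_four ψ α J h3 h6 h7 _ hi2, GG_odd ψ α J h3 h6 h7 _ hm4] at j2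
  have e3 : Nn α J 3 = Nn α J 1 := (Nn_frob hα hJ hF p hp8 1).symm
  have e6 : Nn α J 6 = Nn α J 2 := (Nn_frob hα hJ hF p hp8 2).symm
  have e7 : Nn α J 7 = Nn α J 5 := by
    rw [Nn_frob hα hJ hF p hp8 5]; exact Nn_congr hα hJ hF rfl
  have njac : ∀ z : ℂ, z ^ 4 = -1 → ∑ i ∈ range 8, z ^ i * (Nn α J i : ℂ) =
      ((Nn α J 0 : ℂ) - Nn α J 4) + (z + z ^ 3) * ((Nn α J 1 : ℂ) - Nn α J 5) := by
    intro z hz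
    simp only [sum_range_succ, range_zero, sum_empty, e3, e6, e7]
    linear_combination ((Nn α J 4 : ℂ) + (z + z ^ 3) * (Nn α J 5 : ℂ) +
      z ^ 2 * (Nn α J 2 : ℂ)) * hz
  rw [njac _ hζ] at j1
  rw [njac _ hm4] at j2
  have amod := ab_mod hα hJ hF p n hp8 hq
  have nd := ndvd_ab hα hJ hF p n hp8 hq
  have i2 := eta_int (α := α) (J := J) hψi 2
  have i15 := (eta_int (α := α) (J := J) hψi 1).add (eta_int (α := α) (J := J) hψi 5)
  generalize eta ψ α J 0 = A at *
  generalize eta ψ α J 1 = C at *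
  generalize eta ψ α J 2 = B at *
  generalize eta ψ α J 4 = A' at *
  generalize eta ψ α J 5 = C' at *
  obtain ⟨a', ha'⟩ : ∃ a' : ℤ, a' = (Nn α J 0 : ℤ) - Nn α J 4 := ⟨_, rfl⟩
  obtain ⟨b', hb'⟩ : ∃ b' : ℤ, b' = (Nn α J 1 : ℤ) - Nn α J 5 := ⟨_, rfl⟩
  have haC : (a' : ℂ) = (Nn α J 0 : ℂ) - Nn α J 4 := by rw [ha']; push_cast; rfl
  have hbC : (b' : ℂ) = (Nn α J 1 : ℂ) - Nn α J 5 := by rw [hb']; push_cast; rfl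
  rw [← haC, ← hbC] at j1 j2
  rw [← ha'] at amod
  rw [← ha', ← hb'] at nd
  obtain ⟨s, hs⟩ : ∃ s, s = ζ + ζ ^ 3 := ⟨_, rfl⟩
  have hs2 : s ^ 2 = -2 := by rw [hs]; linear_combination (ζ ^ 2 + 2) * hζ
  have hs7 : ζ ^ 7 + (ζ ^ 7) ^ 3 = - s := by
    rw [hs]
    linear_combination (ζ ^ 3 + ζ * (ζ ^ 16 - ζ ^ 12 + ζ ^ 8 - ζ ^ 4 + 1)) * hζ
  rw [hs7, ← hs, hζ, ← hXC] at g8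
  rw [← hs] at j1
  rw [show -ζ + (-ζ) ^ 3 = - s by rw [hs]; ring] at j2
  -- signs
  have w1 : 4 * (C + C') = - X - 1 := by
    have : ((A + A' + 2 * B - 2 * C - 2 * C') - X) * ((A + A' + 2 * B - 2 * C - 2 * C') + X) = 0 := by
      linear_combination g2 - hXC
    rcases mul_eq_zero.mp this with h | h
    · linear_combination hsum - h
    · exfalso
      have := int_of_integral _ i15 (X - 1) 4 (by norm_num)
        (by push_cast; linear_combination hsum - h)
      omega
  have w2 : A + A' - 2 * B = - X := by
    have : ((A + A' - 2 * B) - X) * ((A + A' - 2 * B) + X) = 0 := by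
      linear_combination g4 - hXC + (8 * J + 1) * (ζ ^ 4 - 1) * hζ
    rcases mul_eq_zero.mp this with h | h
    · exfalso
      have := int_of_integral _ i2 (- X - 1) 8 (by norm_num)
        (by push_cast; linear_combination 2 * hsum - 2 * h - w1)
      omega
    · linear_combination h
  rw [w2] at j1 j2
  have k1 : (A - A') ^ 2 - 2 * (C - C') ^ 2 = - X * a' := by
    linear_combination -(j1 + j2) / 2 - (C - C') ^ 2 * hs2
  have k2 : (A - A') ^ 2 + 2 * (C - C') ^ 2 = - X ^ 2 := by
    linear_combination g8 + (C - C') ^ 2 * hs2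
  have k3 : 2 * (A - A') * (C - C') = - X * b' := by
    have hs0 : s ≠ 0 := by rintro rfl; norm_num at hs2
    apply mul_left_cancel₀ hs0
    linear_combination (j2 - j1) / 2
  have k4 : a' ^ 2 + 2 * b' ^ 2 = X ^ 2 := by
    have : ((a' : ℂ) ^ 2 + 2 * b' ^ 2) = X ^ 2 := by
      apply mul_left_cancel₀ (pow_ne_zero 2 hXC0)
      calc (X : ℂ) ^ 2 * ((a' : ℂ) ^ 2 + 2 * b' ^ 2) = (- X * a') ^ 2 + 2 * (- X * b') ^ 2 := by ring
        _ = ((A - A') ^ 2 + 2 * (C - C') ^ 2) ^ 2 := by rw [← k1, ← k3]; ring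
        _ = _ := by rw [k2]; ring
    exact_mod_cast this
  have hqZ : X ^ 2 = (p : ℤ) ^ (2 * n) := by rw [hX]; exact_mod_cast hq
  have hpp : Prime (p : ℤ) := Nat.prime_iff_prime_int.mp hpr
  have hpX2 : (p : ℤ) ∣ X ^ 2 := by rw [hqZ]; exact dvd_pow_self _ (by omega)
  have hpX : (p : ℤ) ∣ X := hpp.dvd_of_dvd_pow hpX2
  have hp2 : ¬ (p : ℤ) ∣ 2 := by
    intro h
    have : p ∣ 2 := by exact_mod_cast h
    have := Nat.le_of_dvd (by norm_num) this
    have := hpr.two_le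
    omega
  have hna : ¬ (p : ℤ) ∣ a' := by
    intro h
    refine nd h ?_
    have : (p : ℤ) ∣ 2 * b' ^ 2 := by
      have e : 2 * b' ^ 2 = X ^ 2 - a' * a' := by rw [← k4]; ring
      rw [e]; exact dvd_sub hpX2 (Dvd.dvd.mul_left h _)
    rcases hpp.dvd_or_dvd this with h | h
    · exact absurd h hp2
    · exact hpp.dvd_of_dvd_pow h
  have hnX : ¬ (p : ℤ) ∣ X - 2 := by
    intro h
    apply hp2
    have := dvd_sub hpX h
    simpa using this
  have hu := uniq_rep p (2 * n) hpr (by omega) a' b' (X - 2) b (by rw [k4, hqZ])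
    (by rw [← hXb, hqZ]) (by omega) hna hnX
  have haX : a' = 2 - X := by
    rcases sq_eq_sq_iff_eq_or_eq_neg.mp hu with h | h <;> omega
  have haXC : (a' : ℂ) = 2 - X := by rw [haX]; push_cast; rfl
  rw [haXC] at k1
  refine ⟨?_, ?_, w1, ?_, ?_⟩
  · linear_combination 2 * hsum - w1 + 2 * w2
  · linear_combination 2 * hsum - w1 - 2 * w2
  · linear_combination (k1 + k2) / 2
  · linear_combination (k2 - k1) / 2

end core

section fourier
variable {F : Type*} [Field F] [Fintype F] [DecidableEq F]

lemma multiset_sum_count (M : Multiset F) (f : F → ℂ) :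
    (M.map f).sum = ∑ y : F, (M.count y : ℂ) * f y := by
  rw [Finset.sum_multiset_map_count]
  simp only [nsmul_eq_mul]
  apply sum_subset (subset_univ _)
  intro y _ hy
  rw [Multiset.mem_toFinset, ← Multiset.count_eq_zero] at hy
  rw [hy]; simp

lemma fourier_inj {ψ : AddChar F ℂ} (hψ : ψ.IsPrimitive) (M N : Multiset F)
    (h : ∀ t, (M.map (fun y => ψ (t * y))).sum = (N.map (fun y => ψ (t * y))).sum) : M = N := by
  have inv : ∀ (M : Multiset F) (g : F),
      ∑ t, ψ (-(t * g)) * (M.map (fun y => ψ (t * y))).sum = (Fintype.card F : ℂ) * M.count g := by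
    intro M g
    simp_rw [multiset_sum_count, mul_sum]
    rw [sum_comm]
    have : ∀ y, ∑ t, ψ (-(t * g)) * ((M.count y : ℂ) * ψ (t * y)) =
        (M.count y : ℂ) * if y - g = 0 then (Fintype.card F : ℂ) else 0 := by
      intro y
      have hs := AddChar.sum_mulShift (y - g) hψ
      push_cast at hs
      rw [← hs, mul_sum]
      refine sum_congr rfl (fun t _ => ?_)
      rw [show t * (y - g) = -(t * g) + t * y by ring, AddChar.map_add_eq_mul]; ring
    simp_rw [this, sub_eq_zero]
    simp [mul_comm]
  ext g
  have e := inv M g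
  simp_rw [h] at e
  rw [inv N g] at e
  have hc : (Fintype.card F : ℂ) ≠ 0 := by exact_mod_cast Fintype.card_ne_zero
  exact_mod_cast (mul_left_cancel₀ hc e).symm

lemma intDiff_sum (ψ : AddChar F ℂ) (D : Finset F) (t : F) :
    ((intDiff D).map (fun y => ψ (t * y))).sum =
      (∑ y ∈ D, ψ (t * y)) * (∑ y ∈ D, ψ (-(t * y))) - D.card := by
  rw [intDiff, Multiset.map_map]
  change ∑ p ∈ (D ×ˢ D).filter (fun p => p.1 ≠ p.2), ψ (t * (p.1 - p.2)) = _
  have h1 := sum_filter_add_sum_filter_not (D ×ˢ D) (fun p => p.1 ≠ p.2)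
    (fun p => ψ (t * (p.1 - p.2)))
  have h2 : ∑ p ∈ (D ×ˢ D).filter (fun p => ¬ p.1 ≠ p.2), ψ (t * (p.1 - p.2)) = D.card := by
    have : (D ×ˢ D).filter (fun p => ¬ p.1 ≠ p.2) = D.diag := by
      ext p; simp only [mem_filter, mem_product, mem_diag, not_not]
      constructor
      · rintro ⟨⟨h1, _⟩, h2⟩; exact ⟨h1, h2⟩
      · rintro ⟨h1, h2⟩; exact ⟨⟨h1, h2 ▸ h1⟩, h2⟩
    rw [this, sum_diag]
    simp
  rw [h2] at h1
  rw [← add_sub_cancel_right (∑ p ∈ (D ×ˢ D).filter (fun p => p.1 ≠ p.2), ψ (t * (p.1 - p.2)))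
    (D.card : ℂ), h1, sum_mul_sum, sum_product]
  congr 1
  refine sum_congr rfl (fun y _ => sum_congr rfl (fun z _ => ?_))
  rw [← AddChar.map_add_eq_mul]; congr 1; ring

lemma Gstar_sum {ψ : AddChar F ℂ} (hψ : ψ.IsPrimitive) (T : Finset F) (hT : (0 : F) ∉ T)
    (t : F) (ht : t ≠ 0) : ∑ y ∈ Gstar F \ T, ψ (t * y) = - 1 - ∑ y ∈ T, ψ (t * y) := by
  have hs : T ⊆ Gstar F := by
    intro y hy; simp only [Gstar, mem_erase, mem_univ, and_true]; rintro rfl; exact hT hy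
  rw [eq_sub_iff_add_eq, sum_sdiff hs, Gstar]
  have h := AddChar.sum_mulShift t hψ
  rw [if_neg ht] at h
  rw [← add_sum_erase _ _ (mem_univ (0 : F))] at h
  simp only [zero_mul, AddChar.map_zero_eq_one, Nat.cast_zero] at h
  simp_rw [mul_comm t]
  linear_combination h

/-- A criterion for DPDFs built from unions of two classes -/
lemma dpdf_of {α : F} {J : ℕ} (hα : IsPrimitiveElt α) (hJ : 0 < J)
    (hF : Fintype.card F = 8 * J + 1) (hodd : J % 2 = 1) {ψ : AddChar F ℂ}
    (hψ : ψ.IsPrimitive) (i1 i2 k1 k2 : ℕ) (hi1 : i1 < 8) (hi2 : i2 < 8) (hk1 : k1 < 8)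
    (hk2 : k2 < 8) (hne : i1 ≠ i2 ∧ i1 ≠ k1 ∧ i1 ≠ k2 ∧ i2 ≠ k1 ∧ i2 ≠ k2 ∧ k1 ≠ k2)
    (q lam mu : ℕ) (hq : q = 8 * J + 1) (hlm : lam + mu = 2 * J - 1)
    (H : ∀ j < 8, (eta ψ α J (i1 + j) + eta ψ α J (i2 + j)) *
        (eta ψ α J (i1 + j + 4) + eta ψ α J (i2 + j + 4)) +
      (eta ψ α J (k1 + j) + eta ψ α J (k2 + j)) *
        (eta ψ α J (k1 + j + 4) + eta ψ α J (k2 + j + 4)) - 4 * J =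
      lam * (eta ψ α J (0 + j) + eta ψ α J (4 + j) + (eta ψ α J (2 + j) + eta ψ α J (6 + j))) +
      mu * (-1 - (eta ψ α J (0 + j) + eta ψ α J (4 + j) +
        (eta ψ α J (2 + j) + eta ψ α J (6 + j))))) :
    IsDPDF ![cycClass α 8 i1 ∪ cycClass α 8 i2, cycClass α 8 k1 ∪ cycClass α 8 k2]
        q 2 (fun _ => (q - 1) / 4) (cycClass α 2 0) lam mu := by
  obtain ⟨n1, n2, n3, n4, n5, n6⟩ := hne
  have dj := fun (i k : ℕ) (hi : i < 8) (hk : k < 8) (h : i ≠ k) =>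
    disj_Cl hα hJ hF i k (by omega)
  have z := zero_notMem_Cl hα hJ hF
  rw [cyc8_eq hα hJ hF _ hi1, cyc8_eq hα hJ hF _ hi2, cyc8_eq hα hJ hF _ hk1,
    cyc8_eq hα hJ hF _ hk2, cyc2_eq hα hJ hF]
  have c1 : (Cl α J i1 ∪ Cl α J i2).card = 2 * J := by
    rw [card_union_of_disjoint (dj _ _ hi1 hi2 n1), card_Cl hα hJ hF, card_Cl hα hJ hF]; ring
  have c2 : (Cl α J k1 ∪ Cl α J k2).card = 2 * J := by
    rw [card_union_of_disjoint (dj _ _ hk1 hk2 n6), card_Cl hα hJ hF, card_Cl hα hJ hF]; ring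
  have dT : Disjoint (Cl α J 0 ∪ Cl α J 4) (Cl α J 2 ∪ Cl α J 6) := by
    simp only [disjoint_union_left, disjoint_union_right]
    refine ⟨⟨?_, ?_⟩, ?_, ?_⟩ <;> exact dj _ _ (by norm_num) (by norm_num) (by norm_num)
  have d04 := dj 0 4 (by norm_num) (by norm_num) (by norm_num)
  have d26 := dj 2 6 (by norm_num) (by norm_num) (by norm_num)
  have zT : (0 : F) ∉ (Cl α J 0 ∪ Cl α J 4) ∪ (Cl α J 2 ∪ Cl α J 6) := by
    simp only [mem_union, z, or_self, not_false_eq_true]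
  have cT : ((Cl α J 0 ∪ Cl α J 4) ∪ (Cl α J 2 ∪ Cl α J 6)).card = 4 * J := by
    rw [card_union_of_disjoint dT, card_union_of_disjoint d04, card_union_of_disjoint d26]
    simp only [card_Cl hα hJ hF]; ring
  have hdD : Disjoint (Cl α J i1 ∪ Cl α J i2) (Cl α J k1 ∪ Cl α J k2) := by
    simp only [disjoint_union_left, disjoint_union_right]
    exact ⟨⟨dj _ _ hi1 hk1 n2, dj _ _ hi2 hk1 n4⟩, dj _ _ hi1 hk2 n3, dj _ _ hi2 hk2 n5⟩
  have hk : (q - 1) / 4 = 2 * J := by omega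
  refine ⟨by rw [hF, hq], by simp, ?_, ?_, ?_, ?_⟩
  · intro i; fin_cases i <;> simp [z]
  · intro i; fin_cases i <;> simp [c1, c2, hk]
  · intro i k hik
    fin_cases i <;> fin_cases k <;> first | exact absurd rfl hik | skip
    · exact hdD
    · exact hdD.symm
  · apply fourier_inj hψ
    intro t
    have conv : ∀ S : Finset F, (S.val.map (fun y => ψ (t * y))).sum = ∑ y ∈ S, ψ (t * y) :=
      fun _ => rfl
    rw [Fin.sum_univ_two]
    simp only [Matrix.cons_val_zero, Matrix.cons_val_one, Multiset.map_add, Multiset.sum_add,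
      Multiset.map_nsmul, Multiset.sum_nsmul, intDiff_sum, conv, c1, c2, nsmul_eq_mul]
    by_cases ht : t = 0
    · subst ht
      have hs : (Cl α J 0 ∪ Cl α J 4) ∪ (Cl α J 2 ∪ Cl α J 6) ⊆ Gstar F := by
        intro y hy; simp only [Gstar, mem_erase, mem_univ, and_true]; rintro rfl; exact zT hy
      have cG : (Gstar F \ ((Cl α J 0 ∪ Cl α J 4) ∪ (Cl α J 2 ∪ Cl α J 6))).card = 4 * J := by
        rw [card_sdiff_of_subset hs, cT, Gstar, card_erase_of_mem (mem_univ _), card_univ, hF]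
        omega
      simp only [zero_mul, neg_zero, AddChar.map_zero_eq_one, sum_const, c1, c2, cT, cG,
        nsmul_eq_mul, mul_one]
      have hlm' : lam + mu + 1 = 2 * J := by omega
      have hlmC : (lam : ℂ) + mu + 1 = 2 * J := by exact_mod_cast hlm'
      push_cast
      linear_combination -(4 * (J : ℂ)) * hlmC
    · rw [Gstar_sum hψ _ zT t ht]
      obtain ⟨n, rfl⟩ := hα t ht
      have sh : ∀ i, ∑ y ∈ Cl α J i, ψ (α ^ n * y) = eta ψ α J (i + n % 8) := by
        intro i
        rw [mul_Cl hα hJ hF ψ i n]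
        exact eta_congr hα hJ hF ψ (by omega)
      have shn : ∀ i, ∑ y ∈ Cl α J i, ψ (-(α ^ n * y)) = eta ψ α J (i + n % 8 + 4) := by
        intro i
        have hm : (-1 : F) = α ^ (4 * J) := by
          rw [← omega_four hα hJ hF, ← pow_mul, mul_comm]
        have : ∀ y, -(α ^ n * y) = α ^ (4 * J + n) * y := by
          intro y; rw [pow_add, ← hm]; ring
        simp only [this]
        rw [mul_Cl hα hJ hF ψ i (4 * J + n)]
        exact eta_congr hα hJ hF ψ (by omega)
      rw [sum_union (dj _ _ hi1 hi2 n1), sum_union (dj _ _ hi1 hi2 n1),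
        sum_union (dj _ _ hk1 hk2 n6), sum_union (dj _ _ hk1 hk2 n6),
        sum_union dT, sum_union d04, sum_union d26]
      simp only [sh, shn]
      push_cast
      linear_combination H (n % 8) (Nat.mod_lt _ (by norm_num))

end fourier

/-- Let `q = p^m` with `p ≡ 3 (mod 8)` prime and `m ≡ 2 (mod 4)`; let
`x, a, b` be integers with `x² = q`, `q = a² + 2b²`, `a ≡ 1 (mod 4)` and `x + a = -2`.
Then (i) `{C_3^8 ∪ C_5^8, C_2^8 ∪ C_6^8}` is a
`(q,2,(q-1)/4;(q-7-2x)/8,(q-3+2x)/8)`-DPDF relative to `C_0^2`, and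
(ii) `{C_0^8 ∪ C_2^8, C_3^8 ∪ C_7^8}` is a
`(q,2,(q-1)/4;(q-3+2x)/8,(q-7-2x)/8)`-DPDF relative to `C_0^2`. -/
theorem stmt_9 {F : Type*} [Field F] [Fintype F] [DecidableEq F]
    (q p m : ℕ) (hp : p.Prime) (hp8 : p % 8 = 3) (hm : m % 4 = 2)
    (hq : Fintype.card F = q) (hqpm : q = p ^ m)
    (α : F) (hα : IsPrimitiveElt α)
    (x a b : ℤ) (hx : x ^ 2 = (q : ℤ)) (hab : (q : ℤ) = a ^ 2 + 2 * b ^ 2)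
    (ha4 : a % 4 = 1) (hxa : x + a = -2) :
    ∃ lam mu : ℕ,
      8 * (lam : ℤ) = (q : ℤ) - 7 - 2 * x ∧
      8 * (mu : ℤ) = (q : ℤ) - 3 + 2 * x ∧
      IsDPDF ![cycClass α 8 3 ∪ cycClass α 8 5, cycClass α 8 2 ∪ cycClass α 8 6]
        q 2 (fun _ => (q - 1) / 4) (cycClass α 2 0) lam mu ∧
      IsDPDF ![cycClass α 8 0 ∪ cycClass α 8 2, cycClass α 8 3 ∪ cycClass α 8 7]
        q 2 (fun _ => (q - 1) / 4) (cycClass α 2 0) mu lam := by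
  have hpF : Fact p.Prime := ⟨hp⟩
  have hm0 : m ≠ 0 := by omega
  have hchar : CharP F p := by
    obtain ⟨r, hr⟩ := CharP.exists F
    have hrF := CharP.char_is_prime F r
    obtain ⟨n, hrp, hn⟩ := FiniteField.card F r
    rw [hq, hqpm] at hn
    have : p ∣ r ^ (n : ℕ) := by rw [← hn]; exact dvd_pow_self _ hm0
    have := (Nat.prime_dvd_prime_iff_eq hp hrp).mp (hp.dvd_of_dvd_pow this)
    rw [this]; exact hr
  obtain ⟨n, hn⟩ : ∃ n, m = 2 * n := ⟨m / 2, by omega⟩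
  obtain ⟨X, rfl⟩ : ∃ X : ℤ, x = -X := ⟨-x, by ring⟩
  have ha : a = X - 2 := by linarith
  subst ha
  have hXb : X ^ 2 = (X - 2) ^ 2 + 2 * b ^ 2 := by rw [← hab, ← hx]; ring
  have hb2 : b ^ 2 = 2 * (X - 1) := by linarith
  have hX4 : X % 4 = 3 := by omega
  have hX16 : X % 16 = 3 := by
    rcases Int.even_or_odd' b with ⟨c, hc | hc⟩
    · rw [hc] at hb2
      have h1 : X = 2 * c ^ 2 + 1 := by linarith
      rcases Int.even_or_odd' c with ⟨d, hd | hd⟩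
      · rw [hd] at h1; ring_nf at h1; omega
      · rcases Int.even_or_odd' d with ⟨e, he | he⟩
        · rw [hd, he] at h1; ring_nf at h1; omega
        · rw [hd, he] at h1; ring_nf at h1; omega
    · rw [hc] at hb2; ring_nf at hb2; omega
  have hX0 : 3 ≤ X := by
    have := sq_nonneg b
    omega
  have hXq : X ^ 2 = (q : ℤ) := by rw [← hx]; ring
  obtain ⟨Y, hY⟩ : ∃ Y, X = 16 * Y + 3 := ⟨X / 16, by omega⟩
  have hY0 : 0 ≤ Y := by omega
  lift Y to ℕ using hY0
  have hqY : q = 8 * (2 * (16 * Y ^ 2 + 6 * Y) + 1) + 1 := by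
    have : (q : ℤ) = 8 * (2 * (16 * Y ^ 2 + 6 * Y) + 1) + 1 := by rw [← hXq, hY]; ring
    exact_mod_cast this
  obtain ⟨J, hJe⟩ : ∃ J, J = 2 * (16 * Y ^ 2 + 6 * Y) + 1 := ⟨_, rfl⟩
  rw [← hJe] at hqY
  have hodd : J % 2 = 1 := by omega
  have hJ : 0 < J := by omega
  have hF : Fintype.card F = 8 * J + 1 := by rw [hq, hqY]
  have hqp : 8 * J + 1 = p ^ (2 * n) := by rw [← hqY, hqpm, hn]
  obtain ⟨ψ, hψ, hψp, hψi⟩ := exists_psi (F := F) p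
  obtain ⟨e3, e6, e7, E0, E2, E1, S0, S1⟩ := periods hα hJ hF hodd p n (by omega) hp8 hqp hψ
    hψp hψi X b (by rw [hXq, hqY]; push_cast; ring) (by omega) hX16 hXb
  have hXC : (X : ℂ) = 16 * Y + 3 := by rw [hY]; push_cast; rfl
  have hJC : (J : ℂ) = 2 * (16 * Y ^ 2 + 6 * Y) + 1 := by rw [hJe]; push_cast; rfl
  rw [hXC] at E0 E2 E1 S0 S1
  have ec := fun i => eta_congr hα hJ hF ψ (show (i + 8) % 8 = i % 8 by omega)
  have l8 : eta ψ α J 8 = eta ψ α J 0 := ec 0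
  have l9 : eta ψ α J 9 = eta ψ α J 1 := ec 1
  have l10 : eta ψ α J 10 = eta ψ α J 2 := ec 2
  have l11 : eta ψ α J 11 = eta ψ α J 3 := ec 3
  have l12 : eta ψ α J 12 = eta ψ α J 4 := ec 4
  have l13 : eta ψ α J 13 = eta ψ α J 5 := ec 5
  have l14 : eta ψ α J 14 = eta ψ α J 6 := ec 6
  have l15 : eta ψ α J 15 = eta ψ α J 7 := ec 7
  have l16 : eta ψ α J 16 = eta ψ α J 0 := (ec 8).trans l8
  have l17 : eta ψ α J 17 = eta ψ α J 1 := (ec 9).trans l9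
  have l18 : eta ψ α J 18 = eta ψ α J 2 := (ec 10).trans l10
  obtain ⟨A, hA⟩ : ∃ A, A = eta ψ α J 0 - eta ψ α J 4 := ⟨_, rfl⟩
  obtain ⟨C, hC⟩ : ∃ C, C = eta ψ α J 1 - eta ψ α J 5 := ⟨_, rfl⟩
  rw [← hA] at S0
  rw [← hC] at S1
  have f0 : eta ψ α J 0 = (-(4 * Y + 1) + A) / 2 := by rw [hA]; linear_combination E0 / 8
  have f4 : eta ψ α J 4 = (-(4 * Y + 1) - A) / 2 := by rw [hA]; linear_combination E0 / 8
  have f1 : eta ψ α J 1 = (-(4 * Y + 1) + C) / 2 := by rw [hC]; linear_combination E1 / 8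
  have f5 : eta ψ α J 5 = (-(4 * Y + 1) - C) / 2 := by rw [hC]; linear_combination E1 / 8
  have f2 : eta ψ α J 2 = 6 * Y + 1 := by linear_combination E2 / 8
  have hlm : (32 * Y ^ 2 + 16 * Y + 1) + (32 * Y ^ 2 + 8 * Y) = 2 * J - 1 := by
    rw [hJe]; omega
  refine ⟨32 * Y ^ 2 + 16 * Y + 1, 32 * Y ^ 2 + 8 * Y, ?_, ?_, ?_, ?_⟩
  · rw [← hXq, hY]; push_cast; ring
  · rw [← hXq, hY]; push_cast; ring
  · refine dpdf_of hα hJ hF hodd hψ 3 5 2 6 (by norm_num) (by norm_num) (by norm_num)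
      (by norm_num) (by norm_num) q _ _ hqY hlm ?_
    intro j hj
    interval_cases j <;>
    · simp only [Nat.reduceAdd, l8, l9, l10, l11, l12, l13, l14, l15, l16, l17, l18, e3, e6, e7,
        f0, f1, f2, f4, f5, hJC]
      push_cast
      first
      | ring1
      | linear_combination (-1 / 4) * S0
      | linear_combination (-1 / 2) * S1
  · refine dpdf_of hα hJ hF hodd hψ 0 2 3 7 (by norm_num) (by norm_num) (by norm_num)
      (by norm_num) (by norm_num) q _ _ hqY (by omega) ?_
    intro j hj
    interval_cases j <;>
    · simp only [Nat.reduceAdd, l8, l9, l10, l11, l12, l13, l14, l15, l16, l17, l18, e3, e6, e7,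
        f0, f1, f2, f4, f5, hJC]
      push_cast
      first
      | ring1
      | linear_combination (-1 / 4) * S0
      | linear_combination (-1 / 2) * S1
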